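/- Let u solve the Goursat problem, with first partial derivatives bounded on D and ψ′, φ′ bounded. Set N_α = sup_{(x,y)∈D̄}|N(u(x,y))| and A = √( [sup|ψ′| + Y(sup_{D̄}|f| + N_α·sup_{D̄}|u|)]² + [sup|φ′| + X(sup_{D̄}|f| + N_α·sup_{D̄}|u|)]² ). Then for every mesh and every cell index (i,j), and every (x,y) in the closed cell P̄_{i,j}: |u(x,y) − u(x_{i−1}, y_{j−1})| ≤ A·h, where h = √(h₁² + h₂²). -/

import Mathlib

open Set

noncomputable section

/-- The closed domain `D̄ = [0,X] × [0,Y]`. -/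
def clD (X Y : ℝ) : Set (ℝ × ℝ) := Icc 0 X ×ˢ Icc 0 Y

/-- The open domain `D = (0,X) × (0,Y)`. -/
def opD (X Y : ℝ) : Set (ℝ × ℝ) := Ioo 0 X ×ˢ Ioo 0 Y

/-- Partial derivative in the first variable. -/
def pdx (u : ℝ × ℝ → ℝ) (p : ℝ × ℝ) : ℝ := deriv (fun t => u (t, p.2)) p.1

/-- Partial derivative in the second variable. -/
def pdy (u : ℝ × ℝ → ℝ) (p : ℝ × ℝ) : ℝ := deriv (fun t => u (p.1, t)) p.2

/-- Mixed partial derivative `∂²u/∂x∂y` (derivative in `y` of the derivative in `x`). -/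
def pdxy (u : ℝ × ℝ → ℝ) (p : ℝ × ℝ) : ℝ := pdy (pdx u) p

/-- The open mesh cell `P_{i,j} = (x_{i-1}, x_i) × (y_{j-1}, y_j)`, where
`x_i = i·(X/N₁)`, `y_j = j·(Y/N₂)`. -/
def cellOp (X Y : ℝ) (N₁ N₂ : ℕ) (i j : ℕ) : Set (ℝ × ℝ) :=
  Ioo (((i : ℝ) - 1) * (X / N₁)) ((i : ℝ) * (X / N₁)) ×ˢ
    Ioo (((j : ℝ) - 1) * (Y / N₂)) ((j : ℝ) * (Y / N₂))

/-- The closed mesh cell `P̄_{i,j} = [x_{i-1}, x_i] × [y_{j-1}, y_j]`. -/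
def cellCl (X Y : ℝ) (N₁ N₂ : ℕ) (i j : ℕ) : Set (ℝ × ℝ) :=
  Icc (((i : ℝ) - 1) * (X / N₁)) ((i : ℝ) * (X / N₁)) ×ˢ
    Icc (((j : ℝ) - 1) * (Y / N₂)) ((j : ℝ) * (Y / N₂))

/-- The lower-left corner `(x_{i-1}, y_{j-1})` of the cell `P_{i,j}`. -/
def meshNode (X Y : ℝ) (N₁ N₂ : ℕ) (i j : ℕ) : ℝ × ℝ :=
  (((i : ℝ) - 1) * (X / N₁), ((j : ℝ) - 1) * (Y / N₂))

/-- `h = √(h₁² + h₂²)`, with `h₁ = X/N₁`, `h₂ = Y/N₂`. -/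
def meshH (X Y : ℝ) (N₁ N₂ : ℕ) : ℝ := Real.sqrt ((X / N₁) ^ 2 + (Y / N₂) ^ 2)

/-- `u` solves the Goursat problem `∂²u/∂x∂y + N(u)·u = f` on `D`,
`u(x,0) = ψ(x)`, `u(0,y) = φ(y)`, with the regularity stated in the paper. -/
structure GoursatSol (X Y : ℝ) (N : ℝ → ℝ) (f : ℝ × ℝ → ℝ) (ψ φ : ℝ → ℝ)
    (u : ℝ × ℝ → ℝ) : Prop where
  cont : ContinuousOn u (clD X Y)
  diffx : ∀ p ∈ opD X Y, DifferentiableAt ℝ (fun t => u (t, p.2)) p.1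
  diffy : ∀ p ∈ opD X Y, DifferentiableAt ℝ (fun t => u (p.1, t)) p.2
  diffxy : ∀ p ∈ opD X Y, DifferentiableAt ℝ (fun t => pdx u (p.1, t)) p.2
  contx : ContinuousOn (pdx u) (opD X Y)
  conty : ContinuousOn (pdy u) (opD X Y)
  contxy : ContinuousOn (pdxy u) (opD X Y)
  eqn : ∀ p ∈ opD X Y, pdxy u p + N (u p) * u p = f p
  bc1 : ∀ x ∈ Icc (0 : ℝ) X, u (x, 0) = ψ x
  bc2 : ∀ y ∈ Icc (0 : ℝ) Y, u (0, y) = φ y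

/-- The constant
`A = √([sup|ψ′| + Y(sup|f| + N_α·sup|u|)]² + [sup|φ′| + X(sup|f| + N_α·sup|u|)]²)`,
where `N_α = sup_{D̄} |N(u)|`. -/
def constA (X Y : ℝ) (N : ℝ → ℝ) (f : ℝ × ℝ → ℝ) (ψ φ : ℝ → ℝ) (u : ℝ × ℝ → ℝ) : ℝ :=
  Real.sqrt
    (((⨆ x ∈ Ioo (0 : ℝ) X, |deriv ψ x|) +
        Y * ((⨆ p ∈ clD X Y, |f p|) + (⨆ p ∈ clD X Y, |N (u p)|) * ⨆ p ∈ clD X Y, |u p|)) ^ 2 +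
      ((⨆ y ∈ Ioo (0 : ℝ) Y, |deriv φ y|) +
        X * ((⨆ p ∈ clD X Y, |f p|) + (⨆ p ∈ clD X Y, |N (u p)|) * ⨆ p ∈ clD X Y, |u p|)) ^ 2)

/-!
The rectangular increment `u(x₂,y₂) - u(x₂,y₁) - u(x₁,y₂) + u(x₁,y₁)` is controlled by
`sup |∂²u/∂x∂y|` through two applications of the mean value inequality, and the equation bounds
`∂²u/∂x∂y = f - N(u)u`. Taking one side of the rectangle on an axis, where `u` is `ψ` or `φ`, shows
that `u` is Lipschitz in each variable, with constants `sup|ψ′| + Y sup|∂²u/∂x∂y|` and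
`sup|φ′| + X sup|∂²u/∂x∂y|`. The Cauchy–Schwarz inequality merges the two into the Euclidean
Lipschitz constant `A` on `D̄`, and a cell has diameter `h`.
-/

section Preliminaries

lemma le_cbiSup {α ι : Type*} [ConditionallyCompleteLattice α] {s : Set ι} {g : ι → α}
    (hg : BddAbove (g '' s)) {i : ι} (hi : i ∈ s) : g i ≤ ⨆ k ∈ s, g k := by
  refine le_ciSup₂ (f := fun k (_ : k ∈ s) => g k) (hg.mono ?_) i hi
  exact iUnion_subset fun k => range_subset_iff.2 (mem_image_of_mem g)

lemma mul_add_mul_le_sqrt_mul_sqrt (a b c d : ℝ) :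
    a * c + b * d ≤ √(a ^ 2 + b ^ 2) * √(c ^ 2 + d ^ 2) := by
  simpa using Real.sum_mul_le_sqrt_mul_sqrt Finset.univ ![a, b] ![c, d]

lemma continuous_of_forall_hasSum_mul_pow {𝕜 : Type*} [RCLike 𝕜] {ν : ℕ → 𝕜} {N : 𝕜 → 𝕜}
    (hN : ∀ v, HasSum (fun s : ℕ => ν s * v ^ s) (N v)) : Continuous N := by
  have continuousOn_closedBall (r : 𝕜) : ContinuousOn N (Metric.closedBall 0 ‖r‖) := by
    rw [← funext fun v => (hN v).tsum_eq]
    refine continuousOn_tsum (fun s => by fun_prop) (hN r).summable.norm fun s v hv => ?_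
    rw [norm_mul, norm_mul, norm_pow, norm_pow]
    gcongr
    exact mem_closedBall_zero_iff.1 hv
  refine continuous_iff_continuousAt.2 fun v => ?_
  obtain ⟨r, hr⟩ := NormedField.exists_lt_norm 𝕜 ‖v‖
  exact (continuousOn_closedBall r).continuousAt
    (Metric.closedBall_mem_nhds_of_mem (mem_ball_zero_iff.2 hr))

lemma abs_image_sub_le_of_abs_deriv_le_interior {s : Set ℝ} (hs : Convex ℝ s) {g : ℝ → ℝ} {C : ℝ}
    (hg : ContinuousOn g s) (hg' : DifferentiableOn ℝ g (interior s))
    (hC : ∀ x ∈ interior s, |deriv g x| ≤ C) {x y : ℝ} (hx : x ∈ s) (hy : y ∈ s) :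
    |g y - g x| ≤ C * |y - x| := by
  wlog hxy : x ≤ y generalizing x y
  · rw [abs_sub_comm, abs_sub_comm y]
    exact this hy hx (le_of_not_ge hxy)
  rw [abs_of_nonneg (sub_nonneg.2 hxy), abs_le, ← neg_mul]
  exact ⟨hs.mul_sub_le_image_sub_of_le_deriv hg hg' (fun z hz => (abs_le.1 (hC z hz)).1)
      x hx y hy hxy,
    hs.image_sub_le_mul_sub_of_deriv_le hg hg' (fun z hz => (abs_le.1 (hC z hz)).2)
      x hx y hy hxy⟩

end Preliminaries

section RectangularIncrement

/-- The rectangular increment (mixed second difference) of `u` over the rectangle with opposite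
corners `(x₁, y₁)` and `(x₂, y₂)`; it is the discrete counterpart of `∂²u/∂x∂y`. -/
def rectIncrement (u : ℝ × ℝ → ℝ) (x₁ x₂ y₁ y₂ : ℝ) : ℝ :=
  u (x₂, y₂) - u (x₂, y₁) - (u (x₁, y₂) - u (x₁, y₁))

variable {s t : Set ℝ} {u : ℝ × ℝ → ℝ} {K x₁ x₂ y₁ y₂ : ℝ}

lemma abs_rectIncrement_le_of_mem (hs : Convex ℝ s) (ht : Convex ℝ t)
    (hu : ContinuousOn u (s ×ˢ t))
    (hdx : ∀ p ∈ interior s ×ˢ t, DifferentiableAt ℝ (fun x => u (x, p.2)) p.1)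
    (hdxy : ∀ p ∈ interior s ×ˢ t, DifferentiableAt ℝ (fun y => pdx u (p.1, y)) p.2)
    (hK : ∀ p ∈ interior s ×ˢ t, |pdxy u p| ≤ K)
    (hx₁ : x₁ ∈ s) (hx₂ : x₂ ∈ s) (hy₁ : y₁ ∈ t) (hy₂ : y₂ ∈ t) :
    |rectIncrement u x₁ x₂ y₁ y₂| ≤ K * |y₂ - y₁| * |x₂ - x₁| := by
  have slice_continuousOn {y : ℝ} (hy : y ∈ t) : ContinuousOn (fun x => u (x, y)) s :=
    hu.comp (by fun_prop) fun x hx => ⟨hx, hy⟩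
  have slice_differentiableAt {x y : ℝ} (hx : x ∈ interior s) (hy : y ∈ t) :
      DifferentiableAt ℝ (fun x => u (x, y)) x := hdx (x, y) ⟨hx, hy⟩
  refine abs_image_sub_le_of_abs_deriv_le_interior (g := fun x => u (x, y₂) - u (x, y₁)) hs
    ((slice_continuousOn hy₂).sub (slice_continuousOn hy₁)) (fun x hx => ?_) (fun x hx => ?_)
    hx₁ hx₂
  · exact ((slice_differentiableAt hx hy₂).sub
      (slice_differentiableAt hx hy₁)).differentiableWithinAt
  · have deriv_eq : deriv (fun x => u (x, y₂) - u (x, y₁)) x = pdx u (x, y₂) - pdx u (x, y₁) :=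
      deriv_fun_sub (slice_differentiableAt hx hy₂) (slice_differentiableAt hx hy₁)
    rw [deriv_eq]
    exact ht.norm_image_sub_le_of_norm_deriv_le (f := fun y => pdx u (x, y))
      (fun y hy => hdxy (x, y) ⟨hx, hy⟩) (fun y hy => hK (x, y) ⟨hx, hy⟩) hy₁ hy₂

lemma abs_rectIncrement_le_of_mem_closure (hs : Convex ℝ s) (ht : Convex ℝ t)
    (hu : ContinuousOn u (s ×ˢ closure t))
    (hdx : ∀ p ∈ interior s ×ˢ t, DifferentiableAt ℝ (fun x => u (x, p.2)) p.1)
    (hdxy : ∀ p ∈ interior s ×ˢ t, DifferentiableAt ℝ (fun y => pdx u (p.1, y)) p.2)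
    (hK : ∀ p ∈ interior s ×ˢ t, |pdxy u p| ≤ K)
    (hx₁ : x₁ ∈ s) (hx₂ : x₂ ∈ s) (hy₁ : y₁ ∈ closure t) (hy₂ : y₂ ∈ closure t) :
    |rectIncrement u x₁ x₂ y₁ y₂| ≤ K * |y₂ - y₁| * |x₂ - x₁| := by
  -- `pdx u` need not extend continuously to `s ×ˢ closure t`, so pass to the limit in the estimate.
  have slice_continuousOn {x : ℝ} (hx : x ∈ s) : ContinuousOn (fun y => u (x, y)) (closure t) :=
    hu.comp (by fun_prop) fun y hy => ⟨hx, hy⟩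
  have difference_continuousOn {x : ℝ} (hx : x ∈ s) :
      ContinuousOn (fun q : ℝ × ℝ => u (x, q.2) - u (x, q.1)) (closure t ×ˢ closure t) :=
    ((slice_continuousOn hx).comp continuousOn_snd fun _ hq => hq.2).sub
      ((slice_continuousOn hx).comp continuousOn_fst fun _ hq => hq.1)
  refine le_on_closure (s := t ×ˢ t) (x := (y₁, y₂))
    (f := fun q : ℝ × ℝ => |rectIncrement u x₁ x₂ q.1 q.2|)
    (g := fun q : ℝ × ℝ => K * |q.2 - q.1| * |x₂ - x₁|) (fun q hq => ?_) ?_ (by fun_prop) ?_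
  · exact abs_rectIncrement_le_of_mem hs ht (hu.mono (prod_mono_right subset_closure))
      hdx hdxy hK hx₁ hx₂ hq.1 hq.2
  · rw [closure_prod_eq]
    exact ((difference_continuousOn hx₂).sub (difference_continuousOn hx₁)).abs
  · rw [closure_prod_eq]
    exact ⟨hy₁, hy₂⟩

end RectangularIncrement

section Mesh

lemma Icc_mesh_subset_Icc {Z : ℝ} (hZ : 0 ≤ Z) {n k : ℕ} (hk : k ∈ Finset.Icc 1 n) :
    Icc (((k : ℝ) - 1) * (Z / n)) ((k : ℝ) * (Z / n)) ⊆ Icc 0 Z := by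
  obtain ⟨one_le_k, k_le_n⟩ := Finset.mem_Icc.1 hk
  have n_ne_zero : (n : ℝ) ≠ 0 := Nat.cast_ne_zero.2 (by lia)
  have step_nonneg : 0 ≤ Z / n := by positivity
  refine Icc_subset_Icc (mul_nonneg (sub_nonneg.2 (by exact_mod_cast one_le_k)) step_nonneg) ?_
  calc (k : ℝ) * (Z / n) ≤ n * (Z / n) := by gcongr
    _ = Z := mul_div_cancel₀ Z n_ne_zero

variable {X Y : ℝ} {N₁ N₂ i j : ℕ}

lemma cellCl_subset_clD (hX : 0 ≤ X) (hY : 0 ≤ Y) (hi : i ∈ Finset.Icc 1 N₁)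
    (hj : j ∈ Finset.Icc 1 N₂) : cellCl X Y N₁ N₂ i j ⊆ clD X Y :=
  prod_mono (Icc_mesh_subset_Icc hX hi) (Icc_mesh_subset_Icc hY hj)

lemma meshNode_mem_cellCl (hX : 0 ≤ X) (hY : 0 ≤ Y) :
    meshNode X Y N₁ N₂ i j ∈ cellCl X Y N₁ N₂ i j := by
  have left_mem {Z : ℝ} (hZ : 0 ≤ Z) (n k : ℕ) : ((k : ℝ) - 1) * (Z / n) ∈
      Icc (((k : ℝ) - 1) * (Z / n)) ((k : ℝ) * (Z / n)) :=
    left_mem_Icc.2 (mul_le_mul_of_nonneg_right (sub_le_self _ zero_le_one) (by positivity))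
  exact ⟨left_mem hX N₁ i, left_mem hY N₂ j⟩

lemma sqrt_sub_meshNode_le_meshH {p : ℝ × ℝ} (hp : p ∈ cellCl X Y N₁ N₂ i j) :
    √((p.1 - (meshNode X Y N₁ N₂ i j).1) ^ 2 + (p.2 - (meshNode X Y N₁ N₂ i j).2) ^ 2) ≤
      meshH X Y N₁ N₂ := by
  obtain ⟨⟨left_le, le_right⟩, ⟨bottom_le, le_top⟩⟩ := hp
  refine Real.sqrt_le_sqrt (add_le_add ?_ ?_) <;>
    exact pow_le_pow_left₀ (by simp only [meshNode]; linarith)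
      (by simp only [meshNode]; linarith) 2

end Mesh

lemma opD_subset_clD {X Y : ℝ} : opD X Y ⊆ clD X Y :=
  prod_mono Ioo_subset_Icc_self Ioo_subset_Icc_self

lemma isCompact_clD {X Y : ℝ} : IsCompact (clD X Y) :=
  isCompact_Icc.prod isCompact_Icc

namespace GoursatSol

variable {X Y : ℝ} {N : ℝ → ℝ} {f u : ℝ × ℝ → ℝ} {ψ φ : ℝ → ℝ} {K P Q : ℝ}

lemma abs_pdxy_le (hu : GoursatSol X Y N f ψ φ u)
    (hf : BddAbove ((fun p => |f p|) '' clD X Y))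
    (hN : BddAbove ((fun p => |N (u p)|) '' clD X Y)) {p : ℝ × ℝ} (hp : p ∈ opD X Y) :
    |pdxy u p| ≤ (⨆ p ∈ clD X Y, |f p|) +
      (⨆ p ∈ clD X Y, |N (u p)|) * ⨆ p ∈ clD X Y, |u p| := by
  have hp' : p ∈ clD X Y := opD_subset_clD hp
  have le_sup_f : |f p| ≤ ⨆ p ∈ clD X Y, |f p| := le_cbiSup hf hp'
  have le_sup_N : |N (u p)| ≤ ⨆ p ∈ clD X Y, |N (u p)| := le_cbiSup hN hp'
  have le_sup_u : |u p| ≤ ⨆ p ∈ clD X Y, |u p| :=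
    le_cbiSup (isCompact_clD.bddAbove_image hu.cont.abs) hp'
  calc |pdxy u p| = |f p - N (u p) * u p| := by rw [eq_sub_of_add_eq (hu.eqn p hp)]
    _ ≤ |f p| + |N (u p)| * |u p| := by
        rw [← abs_mul]
        exact abs_sub _ _
    _ ≤ _ := add_le_add le_sup_f
        (mul_le_mul le_sup_N le_sup_u (abs_nonneg _) ((abs_nonneg _).trans le_sup_N))

lemma abs_rectIncrement_le (hu : GoursatSol X Y N f ψ φ u) (hY : 0 < Y)
    (hK : ∀ p ∈ opD X Y, |pdxy u p| ≤ K) {x₁ x₂ y₁ y₂ : ℝ}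
    (h₁ : (x₁, y₁) ∈ clD X Y) (h₂ : (x₂, y₂) ∈ clD X Y) :
    |rectIncrement u x₁ x₂ y₁ y₂| ≤ K * |y₂ - y₁| * |x₂ - x₁| := by
  have interior_prod_eq : interior (Icc 0 X) ×ˢ Ioo 0 Y = opD X Y := by rw [interior_Icc, opD]
  have closure_eq : closure (Ioo 0 Y) = Icc 0 Y := closure_Ioo hY.ne
  exact abs_rectIncrement_le_of_mem_closure (convex_Icc 0 X) (convex_Ioo 0 Y)
    (closure_eq ▸ hu.cont) (interior_prod_eq ▸ hu.diffx) (interior_prod_eq ▸ hu.diffxy)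
    (interior_prod_eq ▸ hK) h₁.1 h₂.1 (closure_eq ▸ h₁.2) (closure_eq ▸ h₂.2)

lemma abs_sub_fst_le (hu : GoursatSol X Y N f ψ φ u) (hY : 0 < Y) (hK₀ : 0 ≤ K)
    (hK : ∀ p ∈ opD X Y, |pdxy u p| ≤ K)
    (hψ : ∀ x ∈ Ioo 0 X, DifferentiableAt ℝ ψ x) (hP : ∀ x ∈ Ioo 0 X, |deriv ψ x| ≤ P)
    {x₁ x₂ y : ℝ} (h₁ : (x₁, y) ∈ clD X Y) (h₂ : (x₂, y) ∈ clD X Y) :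
    |u (x₂, y) - u (x₁, y)| ≤ (P + Y * K) * |x₂ - x₁| := by
  have zero_mem : (0 : ℝ) ∈ Icc 0 Y := left_mem_Icc.2 hY.le
  have ψ_continuousOn : ContinuousOn ψ (Icc 0 X) :=
    (hu.cont.comp (f := fun x => (x, 0)) (by fun_prop) fun x hx => ⟨hx, zero_mem⟩).congr
      fun x hx => (hu.bc1 x hx).symm
  have on_axis : |u (x₂, 0) - u (x₁, 0)| ≤ P * |x₂ - x₁| := by
    rw [hu.bc1 x₁ h₁.1, hu.bc1 x₂ h₂.1]
    refine abs_image_sub_le_of_abs_deriv_le_interior (convex_Icc 0 X) ψ_continuousOn ?_ ?_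
      h₁.1 h₂.1 <;> rw [interior_Icc]
    exacts [fun x hx => (hψ x hx).differentiableWithinAt, hP]
  calc |u (x₂, y) - u (x₁, y)|
      = |(u (x₂, 0) - u (x₁, 0)) + rectIncrement u x₁ x₂ 0 y| := by
        congr 1; unfold rectIncrement; ring
    _ ≤ P * |x₂ - x₁| + K * |y - 0| * |x₂ - x₁| :=
        (abs_add_le _ _).trans
          (add_le_add on_axis (hu.abs_rectIncrement_le hY hK ⟨h₁.1, zero_mem⟩ h₂))
    _ ≤ P * |x₂ - x₁| + K * Y * |x₂ - x₁| := by
        rw [sub_zero, abs_of_nonneg h₂.2.1]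
        gcongr
        exact h₂.2.2
    _ = (P + Y * K) * |x₂ - x₁| := by ring

lemma abs_sub_snd_le (hu : GoursatSol X Y N f ψ φ u) (hX : 0 < X) (hY : 0 < Y) (hK₀ : 0 ≤ K)
    (hK : ∀ p ∈ opD X Y, |pdxy u p| ≤ K)
    (hφ : ∀ y ∈ Ioo 0 Y, DifferentiableAt ℝ φ y) (hQ : ∀ y ∈ Ioo 0 Y, |deriv φ y| ≤ Q)
    {x y₁ y₂ : ℝ} (h₁ : (x, y₁) ∈ clD X Y) (h₂ : (x, y₂) ∈ clD X Y) :
    |u (x, y₂) - u (x, y₁)| ≤ (Q + X * K) * |y₂ - y₁| := by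
  have zero_mem : (0 : ℝ) ∈ Icc 0 X := left_mem_Icc.2 hX.le
  have φ_continuousOn : ContinuousOn φ (Icc 0 Y) :=
    (hu.cont.comp (f := fun y => (0, y)) (by fun_prop) fun y hy => ⟨zero_mem, hy⟩).congr
      fun y hy => (hu.bc2 y hy).symm
  have on_axis : |u (0, y₂) - u (0, y₁)| ≤ Q * |y₂ - y₁| := by
    rw [hu.bc2 y₁ h₁.2, hu.bc2 y₂ h₂.2]
    refine abs_image_sub_le_of_abs_deriv_le_interior (convex_Icc 0 Y) φ_continuousOn ?_ ?_
      h₁.2 h₂.2 <;> rw [interior_Icc]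
    exacts [fun y hy => (hφ y hy).differentiableWithinAt, hQ]
  calc |u (x, y₂) - u (x, y₁)|
      = |(u (0, y₂) - u (0, y₁)) + rectIncrement u 0 x y₁ y₂| := by
        congr 1; unfold rectIncrement; ring
    _ ≤ Q * |y₂ - y₁| + K * |y₂ - y₁| * |x - 0| :=
        (abs_add_le _ _).trans
          (add_le_add on_axis (hu.abs_rectIncrement_le hY hK ⟨zero_mem, h₁.2⟩ h₂))
    _ ≤ Q * |y₂ - y₁| + K * |y₂ - y₁| * X := by
        rw [sub_zero, abs_of_nonneg h₂.1.1]
        gcongr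
        exact h₂.1.2
    _ = (Q + X * K) * |y₂ - y₁| := by ring

lemma abs_sub_le_sqrt_mul_sqrt (hu : GoursatSol X Y N f ψ φ u) (hX : 0 < X) (hY : 0 < Y)
    (hψ : ∀ x ∈ Ioo 0 X, DifferentiableAt ℝ ψ x) (hφ : ∀ y ∈ Ioo 0 Y, DifferentiableAt ℝ φ y)
    (hP : ∀ x ∈ Ioo 0 X, |deriv ψ x| ≤ P) (hQ : ∀ y ∈ Ioo 0 Y, |deriv φ y| ≤ Q)
    (hK : ∀ p ∈ opD X Y, |pdxy u p| ≤ K) {p q : ℝ × ℝ} (hp : p ∈ clD X Y) (hq : q ∈ clD X Y) :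
    |u p - u q| ≤
      √((P + Y * K) ^ 2 + (Q + X * K) ^ 2) * √((p.1 - q.1) ^ 2 + (p.2 - q.2) ^ 2) := by
  have hK₀ : 0 ≤ K := by
    obtain ⟨r, hr⟩ : (opD X Y).Nonempty := (nonempty_Ioo.2 hX).prod (nonempty_Ioo.2 hY)
    exact (abs_nonneg _).trans (hK r hr)
  have corner_mem : (q.1, p.2) ∈ clD X Y := ⟨hq.1, hp.2⟩
  calc |u p - u q| ≤ |u p - u (q.1, p.2)| + |u (q.1, p.2) - u q| := abs_sub_le _ _ _
    _ ≤ (P + Y * K) * |p.1 - q.1| + (Q + X * K) * |p.2 - q.2| :=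
        add_le_add (hu.abs_sub_fst_le hY hK₀ hK hψ hP corner_mem hp)
          (hu.abs_sub_snd_le hX hY hK₀ hK hφ hQ hq corner_mem)
    _ ≤ _ := by
        simpa only [sq_abs] using
          mul_add_mul_le_sqrt_mul_sqrt (P + Y * K) (Q + X * K) |p.1 - q.1| |p.2 - q.2|

theorem abs_sub_le_constA_mul_sqrt (hu : GoursatSol X Y N f ψ φ u) (hX : 0 < X) (hY : 0 < Y)
    (hf : BddAbove ((fun p => |f p|) '' clD X Y))
    (hN : BddAbove ((fun p => |N (u p)|) '' clD X Y))
    (hψ : ∀ x ∈ Ioo 0 X, DifferentiableAt ℝ ψ x) (hφ : ∀ y ∈ Ioo 0 Y, DifferentiableAt ℝ φ y)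
    (hbψ : BddAbove ((fun x => |deriv ψ x|) '' Ioo 0 X))
    (hbφ : BddAbove ((fun y => |deriv φ y|) '' Ioo 0 Y))
    {p q : ℝ × ℝ} (hp : p ∈ clD X Y) (hq : q ∈ clD X Y) :
    |u p - u q| ≤ constA X Y N f ψ φ u * √((p.1 - q.1) ^ 2 + (p.2 - q.2) ^ 2) :=
  hu.abs_sub_le_sqrt_mul_sqrt hX hY hψ hφ (fun _ => le_cbiSup hbψ) (fun _ => le_cbiSup hbφ)
    (fun _ => hu.abs_pdxy_le hf hN) hp hq

end GoursatSol

theorem lower_left_corner_estimate_general {X Y : ℝ} (hX : 0 < X) (hY : 0 < Y)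
    {N : ℝ → ℝ} {f u : ℝ × ℝ → ℝ} {ψ φ : ℝ → ℝ} (hu : GoursatSol X Y N f ψ φ u)
    (hf : BddAbove ((fun p => |f p|) '' clD X Y))
    (hN : BddAbove ((fun p => |N (u p)|) '' clD X Y))
    (hψ : ∀ x ∈ Ioo 0 X, DifferentiableAt ℝ ψ x) (hφ : ∀ y ∈ Ioo 0 Y, DifferentiableAt ℝ φ y)
    (hbψ : BddAbove ((fun x => |deriv ψ x|) '' Ioo 0 X))
    (hbφ : BddAbove ((fun y => |deriv φ y|) '' Ioo 0 Y))
    {N₁ N₂ i j : ℕ} (hi : i ∈ Finset.Icc 1 N₁) (hj : j ∈ Finset.Icc 1 N₂)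
    {p : ℝ × ℝ} (hp : p ∈ cellCl X Y N₁ N₂ i j) :
    |u p - u (meshNode X Y N₁ N₂ i j)| ≤ constA X Y N f ψ φ u * meshH X Y N₁ N₂ := by
  have cell_subset := cellCl_subset_clD hX.le hY.le hi hj
  have node_mem := cell_subset (meshNode_mem_cellCl hX.le hY.le)
  exact (hu.abs_sub_le_constA_mul_sqrt hX hY hf hN hψ hφ hbψ hbφ (cell_subset hp) node_mem).trans
    (mul_le_mul_of_nonneg_left (sqrt_sub_meshNode_le_meshH hp) (Real.sqrt_nonneg _))

/-- If the solution `u` of the Goursat problem has bounded first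
partial derivatives and `ψ′, φ′` are bounded, then for every mesh, every cell and every
point `(x,y)` of the closed cell `P̄_{i,j}`:
`|u(x,y) − u(x_{i−1}, y_{j−1})| ≤ A·h`. -/
theorem lower_left_corner_estimate
    (X Y : ℝ) (hX : 0 < X) (hY : 0 < Y)
    (ν : ℕ → ℝ) (N : ℝ → ℝ)
    (hN : ∀ v : ℝ, HasSum (fun s : ℕ => ν s * v ^ s) (N v))
    (f : ℝ × ℝ → ℝ) (hf : ContinuousOn f (clD X Y))
    (ψ φ : ℝ → ℝ)
    (hψc : ContinuousOn ψ (Icc 0 X))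
    (hψd : ∀ x ∈ Ioo (0 : ℝ) X, DifferentiableAt ℝ ψ x)
    (hφc : ContinuousOn φ (Icc 0 Y))
    (hφd : ∀ y ∈ Ioo (0 : ℝ) Y, DifferentiableAt ℝ φ y)
    (hcomp : ψ 0 = φ 0)
    (u : ℝ × ℝ → ℝ) (hu : GoursatSol X Y N f ψ φ u)
    (hxext : ContinuousOn (pdx u) (Ioo 0 X ×ˢ Ico 0 Y))
    (hyext : ContinuousOn (pdy u) (Ico 0 X ×ˢ Ioo 0 Y))
    (hbx : BddAbove ((fun p => |pdx u p|) '' opD X Y))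
    (hby : BddAbove ((fun p => |pdy u p|) '' opD X Y))
    (hbψ : BddAbove ((fun x => |deriv ψ x|) '' Ioo 0 X))
    (hbφ : BddAbove ((fun y => |deriv φ y|) '' Ioo 0 Y)) :
    ∀ N₁ N₂ : ℕ, 1 ≤ N₁ → 1 ≤ N₂ →
      ∀ i ∈ Finset.Icc 1 N₁, ∀ j ∈ Finset.Icc 1 N₂, ∀ p ∈ cellCl X Y N₁ N₂ i j,
        |u p - u (meshNode X Y N₁ N₂ i j)| ≤
          constA X Y N f ψ φ u * meshH X Y N₁ N₂ := by
  intro N₁ N₂ _ _ i hi j hj p hp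
  exact lower_left_corner_estimate_general hX hY hu (isCompact_clD.bddAbove_image hf.abs)
    (isCompact_clD.bddAbove_image
      ((continuous_of_forall_hasSum_mul_pow hN).comp_continuousOn hu.cont).abs)
    hψd hφd hbψ hbφ hi hj hp
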